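/- Let k be a field and α ≥ 1 an integer. The quotient of the polynomial ring k[X] by the k-subalgebra generated by X^{2α−1} and X^{2α+1} (taken as a quotient of k-vector spaces, dividing by the underlying k-submodule of the subalgebra) has dimension 2α(α−1) over k. -/

import Mathlib

open Polynomial

/-!
The subalgebra generated by powers of `X` is spanned by the monomials whose exponents lie in the
additive semigroup `S` generated by the given exponents, so its codimension is the number of gaps
of `S`. When `S` is generated by coprime `m` and `n`, all gaps lie below `(m - 1) * (n - 1)`, and in
this range the reflection `i ↦ m * n - m - n - i` exchanges the gaps with the elements of `S`, so
exactly half of these numbers are gaps.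
-/

section Codimension

open Module Submodule

theorem finrank_quotient_span_basis_image {ι R M : Type*} [Ring R] [StrongRankCondition R]
    [AddCommGroup M] [Module R M] (b : Basis ι R M) (s : Set ι) :
    finrank R (M ⧸ span R (b '' s)) = sᶜ.ncard := by
  have hcompl : IsCompl (span R (b '' s)) (span R (b '' sᶜ)) :=
    b.linearIndependent.isCompl_span_image b.span_eq isCompl_compl
  have hindep : LinearIndepOn R b sᶜ := b.linearIndependent.linearIndepOn _
  rw [(quotientEquivOfIsCompl _ _ hcompl).finrank_eq, Set.image_eq_range,
    finrank_eq_nat_card_basis (Basis.span hindep), Nat.card_coe_set_eq]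

theorem coe_closure_pow_image {M : Type*} [Monoid M] (a : M) (T : Set ℕ) :
    (Submonoid.closure ((a ^ ·) '' T) : Set M) = (a ^ ·) '' (AddSubmonoid.closure T : Set ℕ) := by
  have hmap := MonoidHom.map_mclosure (powersHom M a) (Multiplicative.toAdd ⁻¹' T)
  rw [← AddSubmonoid.toSubmonoid_closure] at hmap
  exact congrArg SetLike.coe hmap.symm

theorem toSubmodule_adjoin_pow_image (R : Type*) {A : Type*} [CommSemiring R] [Semiring A]
    [Algebra R A] (a : A) (T : Set ℕ) :
    Subalgebra.toSubmodule (Algebra.adjoin R ((a ^ ·) '' T)) =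
      span R ((a ^ ·) '' (AddSubmonoid.closure T : Set ℕ)) := by
  rw [Algebra.adjoin_eq_span, coe_closure_pow_image]

theorem finrank_quotient_adjoin_X_pow_image (R : Type*) [CommRing R] [Nontrivial R] (T : Set ℕ) :
    finrank R (R[X] ⧸ Subalgebra.toSubmodule (Algebra.adjoin R ((X ^ · : ℕ → R[X]) '' T))) =
      (AddSubmonoid.closure T : Set ℕ)ᶜ.ncard := by
  have hbasis : (X ^ · : ℕ → R[X]) = basisMonomials R := by
    simp only [coe_basisMonomials, X_pow_eq_monomial]
  rw [toSubmodule_adjoin_pow_image, hbasis, finrank_quotient_span_basis_image]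

end Codimension

section Gaps

theorem two_mul_ncard_compl_of_symmetric {S : Set ℕ} {c : ℕ} (hlt : ∀ i ∉ S, i < c)
    (hsymm : ∀ i j, i + j + 1 = c → (i ∈ S ↔ j ∉ S)) : 2 * Sᶜ.ncard = c := by
  classical
  have hgaps : Sᶜ = ({i ∈ Finset.range c | i ∉ S} : Finset ℕ) := by
    ext i
    simpa using hlt i
  have hflip : ∀ i < c, (c - 1 - i ∈ S ↔ i ∉ S) := fun i hi ↦ hsymm _ i (by lia)
  have hreflect : {i ∈ Finset.range c | i ∈ S}.card = {i ∈ Finset.range c | i ∉ S}.card :=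
    Finset.card_bij' (fun i _ ↦ c - 1 - i) (fun i _ ↦ c - 1 - i)
      (by grind) (by grind) (by grind) (by grind)
  have htotal := Finset.card_filter_add_card_filter_not (s := Finset.range c) (· ∈ S)
  rw [Finset.card_range] at htotal
  rw [hgaps, Set.ncard_coe_finset]
  lia

variable {m n : ℕ}

theorem exists_mul_add_mul_eq_add_mul (hcop : m.Coprime n) (hm : m ≠ 0) (i : ℕ) :
    ∃ a b, b < m ∧ a * m + b * n = i + m * n := by
  obtain ⟨b, hb, hmod⟩ := Nat.exists_mul_mod_eq_of_coprime i hcop.symm hm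
  have hle : n * b ≤ i + m * n := by nlinarith
  have hdvd : m ∣ i + m * n - n * b :=
    (Nat.modEq_iff_dvd' hle).mp (hmod.trans (Nat.add_mul_mod_self_left i m n).symm)
  obtain ⟨a, ha⟩ := hdvd
  exact ⟨a, b, hb, by grind⟩

theorem mem_closure_pair_iff_notMem (hcop : m.Coprime n) {i j : ℕ}
    (hij : i + j + m + n = m * n) :
    i ∈ AddSubmonoid.closure {m, n} ↔ j ∉ AddSubmonoid.closure {m, n} := by
  simp only [AddSubmonoid.mem_closure_pair, smul_eq_mul]
  constructor
  · rintro ⟨a, b, hi⟩ ⟨c, d, hj⟩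
    refine hcop.mul_add_mul_ne_mul (Nat.succ_ne_zero (a + c)) (Nat.succ_ne_zero (b + d)) ?_
    linarith
  · intro hj
    have hm : m ≠ 0 := by
      rintro rfl
      simp_all
    obtain ⟨a, b, hb, hab⟩ := exists_mul_add_mul_eq_add_mul hcop hm i
    rcases le_or_gt n a with ha | ha
    · obtain ⟨a, rfl⟩ := Nat.exists_eq_add_of_le ha
      exact ⟨a, b, by linarith⟩
    · -- Here `j = (n - 1 - a) * m + (m - 1 - b) * n`.
      obtain ⟨c, rfl⟩ := Nat.exists_eq_add_of_lt ha
      obtain ⟨d, rfl⟩ := Nat.exists_eq_add_of_lt hb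
      exact absurd ⟨c, d, by linarith⟩ hj

theorem lt_of_notMem_closure_pair (hcop : m.Coprime n) {i : ℕ}
    (hi : i ∉ AddSubmonoid.closure {m, n}) : i < (m - 1) * (n - 1) := by
  contrapose! hi
  exact (AddSubmonoid.mem_closure_pair ..).mpr
    (Nat.exists_add_mul_eq_of_gcd_dvd_of_mul_pred_le m n i (by simp [hcop.gcd_eq_one]) hi)

/-- **Sylvester's theorem**. -/
theorem two_mul_ncard_compl_closure_pair (hcop : m.Coprime n) :
    2 * (AddSubmonoid.closure {m, n} : Set ℕ)ᶜ.ncard = (m - 1) * (n - 1) := by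
  refine two_mul_ncard_compl_of_symmetric (fun i hi ↦ lt_of_notMem_closure_pair hcop hi)
    fun i j hij ↦ mem_closure_pair_iff_notMem hcop ?_
  obtain ⟨hm, hn⟩ : m - 1 ≠ 0 ∧ n - 1 ≠ 0 := mul_ne_zero_iff.mp (by lia)
  obtain ⟨m, rfl⟩ := Nat.exists_eq_add_of_lt (Nat.pos_of_ne_zero (by lia : m ≠ 0))
  obtain ⟨n, rfl⟩ := Nat.exists_eq_add_of_lt (Nat.pos_of_ne_zero (by lia : n ≠ 0))
  simp only [zero_add, Nat.add_sub_cancel] at hij ⊢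
  linarith

end Gaps

theorem two_mul_finrank_quotient_adjoin_X_pow_pair (R : Type*) [CommRing R] [Nontrivial R]
    {m n : ℕ} (hcop : m.Coprime n) :
    2 * Module.finrank R
      (R[X] ⧸ Subalgebra.toSubmodule (Algebra.adjoin R ({X ^ m, X ^ n} : Set R[X]))) =
      (m - 1) * (n - 1) := by
  rw [← Set.image_pair (X ^ · : ℕ → R[X]) m n, finrank_quotient_adjoin_X_pow_image,
    two_mul_ncard_compl_closure_pair hcop]

theorem finrank_quotient_cusp_infty_general (R : Type*) [CommRing R] [Nontrivial R]
    (α : ℕ) (hα : 1 ≤ α) :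
    Module.finrank R
      (R[X] ⧸ Subalgebra.toSubmodule
        (Algebra.adjoin R ({X ^ (2 * α - 1), X ^ (2 * α + 1)} : Set R[X]))) =
      2 * α * (α - 1) := by
  obtain ⟨β, rfl⟩ := Nat.exists_eq_add_of_le' hα
  have hcop : (2 * (β + 1) - 1).Coprime (2 * (β + 1) + 1) := by
    rw [show 2 * (β + 1) - 1 = 2 * β + 1 by lia, show 2 * (β + 1) + 1 = 2 * β + 1 + 2 by lia]
    simp
  have hrank := two_mul_finrank_quotient_adjoin_X_pow_pair R hcop
  rw [show 2 * (β + 1) - 1 - 1 = 2 * β by lia, Nat.add_sub_cancel] at hrank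
  rw [Nat.add_sub_cancel]
  linarith

/-- The quotient of `k[X]` by the `k`-subalgebra generated by `X^(2α−1)` and
`X^(2α+1)` (as a quotient of `k`-vector spaces) has dimension `2α(α−1)`. -/
theorem finrank_quotient_cusp_infty (k : Type*) [Field k] (α : ℕ) (hα : 1 ≤ α) :
    Module.finrank k
      (k[X] ⧸ Subalgebra.toSubmodule
        (Algebra.adjoin k ({X ^ (2 * α - 1), X ^ (2 * α + 1)} : Set k[X]))) =
      2 * α * (α - 1) :=
  finrank_quotient_cusp_infty_general k α hα
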